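/- arXiv:1411.7467 — 2 statements merged into one kernel-verified Lean document; each statement's English description precedes it below -/
import Mathlib

section
/- Let γ ≥ 1/2 be a half-integer and j ∈ {−1/2, 0, 1/2, 1, …} with j > γ − 1. Then for every μ ∈ {−γ, −γ+1, …, γ} and every n ∈ ℕ, the vector (𝒥₊)ⁿ ψ_(μ) ∈ F_γ ⊗ D⁺_j is nonzero. -/
/-!
Statement 0: lowest weight vectors ψ_(μ) in the coupling F_γ ⊗ D⁺_j for sl(2,ℝ).

Conventions: γ = G/2 with `G : ℕ`, `1 ≤ G`; j = (K-1)/2 with `K : ℕ` (so j ∈ {-1/2,0,1/2,...}).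
The space F_γ ⊗ D⁺_j has basis indexed by `(ν, k) : Fin (G+1) × ℕ`, the basis vector
`single (ν,k) 1` representing |γ, ν-γ⟩ ⊗ |j, j+1+k⟩.
-/

noncomputable section

/-- Principal branch of the complex square root. -/
def csqrt (z : ℂ) : ℂ := z ^ ((1 : ℂ) / 2)

/-- C₊(j,m) = i √(j-m) √(j+m+1). -/
def Cp (j m : ℂ) : ℂ := Complex.I * csqrt (j - m) * csqrt (j + m + 1)

/-- C₋(j,m) = i √(j+m) √(j-m+1). -/
def Cm (j m : ℂ) : ℂ := Complex.I * csqrt (j + m) * csqrt (j - m + 1)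

/-- γ = G/2, as a complex number. -/
def gam (G : ℕ) : ℂ := (G : ℂ) / 2

/-- j = (K-1)/2, as a complex number. -/
def jd (K : ℕ) : ℂ := ((K : ℂ) - 1) / 2

/-- μ = ν - γ for ν : Fin (G+1). -/
def muc (G : ℕ) (ν : Fin (G + 1)) : ℂ := ((ν : ℕ) : ℂ) - gam G

/-- m = j + 1 + k for k : ℕ. -/
def md (K : ℕ) (k : ℕ) : ℂ := jd K + 1 + (k : ℂ)

/-- The vector space F_γ ⊗ D⁺_j. -/
abbrev W (G : ℕ) := (Fin (G + 1) × ℕ) →₀ ℂ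

/-- Basis vector with coefficient, with out-of-range indices giving 0. -/
def eV (G : ℕ) (i k : ℤ) (c : ℂ) : W G :=
  if h : 0 ≤ i ∧ i < (G : ℤ) + 1 ∧ 0 ≤ k then
    Finsupp.single ((⟨i.toNat, by omega⟩ : Fin (G + 1)), k.toNat) c
  else 0

/-- 𝒥₀ = J₀ ⊗ 1 + 1 ⊗ J₀. -/
def J0 (G K : ℕ) : W G →ₗ[ℂ] W G :=
  Finsupp.lsum ℂ fun p => LinearMap.toSpanSingleton ℂ (W G)
    (Finsupp.single p (muc G p.1 + md K p.2))

/-- 𝒥₊ = J₊ ⊗ 1 + 1 ⊗ J₊. -/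
def Jp (G K : ℕ) : W G →ₗ[ℂ] W G :=
  Finsupp.lsum ℂ fun p => LinearMap.toSpanSingleton ℂ (W G)
    (eV G ((p.1 : ℕ) + 1) (p.2 : ℕ) (Cp (gam G) (muc G p.1)) +
      eV G (p.1 : ℕ) ((p.2 : ℕ) + 1) (Cp (jd K) (md K p.2)))

/-- 𝒥₋ = J₋ ⊗ 1 + 1 ⊗ J₋. -/
def Jm (G K : ℕ) : W G →ₗ[ℂ] W G :=
  Finsupp.lsum ℂ fun p => LinearMap.toSpanSingleton ℂ (W G)
    (eV G ((p.1 : ℕ) - 1) (p.2 : ℕ) (Cm (gam G) (muc G p.1)) +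
      eV G (p.1 : ℕ) ((p.2 : ℕ) - 1) (Cm (jd K) (md K p.2)))

/-- The Casimir 𝒬 = -𝒥₀(𝒥₀+1) + 𝒥₋𝒥₊. -/
def Qcas (G K : ℕ) : W G →ₗ[ℂ] W G :=
  -(J0 G K ∘ₗ (J0 G K + LinearMap.id)) + Jm G K ∘ₗ Jp G K

/-- The lowest weight vector ψ_(μ), μ = t - γ:
ψ_(μ) = Σ_{ν=-γ}^{μ} (-1)^{γ+ν} (Π_{σ=-γ}^{ν-1} C₊(j, j+μ-σ)/C₊(γ,σ)) |γ,ν⟩ ⊗ |j, j+1+μ-ν⟩. -/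
def psiLW (G K : ℕ) (t : Fin (G + 1)) : W G :=
  ∑ s ∈ Finset.range (t.1 + 1),
    eV G (s : ℤ) ((t.1 : ℤ) - (s : ℤ))
      ((-1 : ℂ) ^ s *
        ∏ r ∈ Finset.range s,
          Cp (jd K) (jd K + ((t.1 : ℕ) : ℂ) - (r : ℂ)) / Cp (gam G) ((r : ℂ) - gam G))

/-- q_(μ) = -(j+μ)(j+μ+1). -/
def qe (G K : ℕ) (t : Fin (G + 1)) : ℂ :=
  -((jd K + muc G t) * (jd K + muc G t + 1))

/-!
`𝒥₊` is injective, so it suffices that `ψ_(μ) ≠ 0`, which is clear from its coefficient `1` along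
`|γ, -γ⟩ ⊗ |j, j+1+γ+μ⟩`. For the injectivity, `J₊ ⊗ 1` strictly raises the first label, whereas
`1 ⊗ J₊` preserves it and is injective because `C₊(j, m) ≠ 0` for every weight `m` of `D⁺_j`. Hence
`𝒥₊` is triangular with injective diagonal with respect to the first label.
-/

@[simp]
theorem csqrt_eq_zero_iff {z : ℂ} : csqrt z = 0 ↔ z = 0 := by
  simp [csqrt]

theorem Cp_eq_zero_iff {j m : ℂ} : Cp j m = 0 ↔ j - m = 0 ∨ j + m + 1 = 0 := by
  simp [Cp]

theorem Cp_jd_md_ne_zero (K k : ℕ) : Cp (jd K) (md K k) ≠ 0 := by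
  have hsub : jd K - md K k = -((k + 1 : ℕ) : ℂ) := by
    unfold md; push_cast; ring
  have hadd : jd K + md K k + 1 = ((K + k + 1 : ℕ) : ℂ) := by
    unfold md jd; push_cast; ring
  rw [Ne, Cp_eq_zero_iff, hsub, hadd, neg_eq_zero, Nat.cast_eq_zero, Nat.cast_eq_zero]
  omega

theorem eV_apply (G : ℕ) (i k : ℤ) (c : ℂ) (a : Fin (G + 1)) (b : ℕ) :
    eV G i k c (a, b) = if i = (a : ℕ) ∧ k = b then c else 0 := by
  unfold eV
  split_ifs with hrange heq heq
  · obtain ⟨rfl, rfl⟩ := heq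
    simp
  · refine Finsupp.single_eq_of_ne fun hab => heq ?_
    simp only [Prod.mk.injEq, Fin.ext_iff] at hab
    omega
  · omega
  · rfl

theorem Jp_single_apply (G K : ℕ) (a a' : Fin (G + 1)) (b b' : ℕ) (c : ℂ) :
    Jp G K (Finsupp.single (a, b) c) (a', b') =
      c * ((if (a : ℕ) + 1 = a' ∧ b = b' then Cp (gam G) (muc G a) else 0) +
        if a = a' ∧ b + 1 = b' then Cp (jd K) (md K b) else 0) := by
  simp only [Jp, Finsupp.lsum_single, LinearMap.toSpanSingleton_apply, Finsupp.smul_apply,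
    Finsupp.add_apply, eV_apply, smul_eq_mul, Fin.ext_iff]
  norm_cast

theorem Jp_apply_zero_succ (G K : ℕ) (v : W G) (k : ℕ) :
    Jp G K v (0, k + 1) = Cp (jd K) (md K k) * v (0, k) := by
  induction v using Finsupp.induction_linear with
  | zero => simp
  | add v w hv hw => rw [map_add, Finsupp.add_apply, hv, hw, Finsupp.add_apply, mul_add]
  | single p c =>
    obtain ⟨a, b⟩ := p
    rw [Jp_single_apply, Finsupp.single_apply]
    grind [Fin.val_zero]

theorem Jp_apply_succ_succ (G K : ℕ) (v : W G) (a : Fin G) (k : ℕ) :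
    Jp G K v (a.succ, k + 1) =
      Cp (gam G) (muc G a.castSucc) * v (a.castSucc, k + 1) +
        Cp (jd K) (md K k) * v (a.succ, k) := by
  induction v using Finsupp.induction_linear with
  | zero => simp
  | add v w hv hw =>
    rw [map_add, Finsupp.add_apply, hv, hw, Finsupp.add_apply, Finsupp.add_apply]
    ring
  | single p c =>
    obtain ⟨i, b⟩ := p
    rw [Jp_single_apply, Finsupp.single_apply, Finsupp.single_apply]
    grind [Fin.val_castSucc]

theorem Jp_injective (G K : ℕ) : Function.Injective (Jp G K) := by
  rw [injective_iff_map_eq_zero]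
  intro v hv
  have hcoeff : ∀ a k, v (a, k) = 0 := by
    intro a
    induction a using Fin.induction with
    | zero =>
      intro k
      have hrow := Jp_apply_zero_succ G K v k
      rw [hv, Finsupp.zero_apply] at hrow
      exact (mul_eq_zero.mp hrow.symm).resolve_left (Cp_jd_md_ne_zero K k)
    | succ a ih =>
      intro k
      have hrow := Jp_apply_succ_succ G K v a k
      rw [hv, Finsupp.zero_apply, ih, mul_zero, zero_add] at hrow
      exact (mul_eq_zero.mp hrow.symm).resolve_left (Cp_jd_md_ne_zero K k)
  exact Finsupp.ext fun p => hcoeff p.1 p.2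

theorem psiLW_apply_zero (G K : ℕ) (t : Fin (G + 1)) : psiLW G K t (0, t) = 1 := by
  rw [psiLW, Finsupp.finsetSum_apply, Finset.sum_eq_single 0]
  · simp [eV_apply]
  · intro s _ hs
    simp [eV_apply, hs]
  · simp

theorem psiLW_ne_zero (G K : ℕ) (t : Fin (G + 1)) : psiLW G K t ≠ 0 := by
  intro h
  simpa [h] using psiLW_apply_zero G K t

theorem Jp_pow_psiLW_ne_zero_general (G K : ℕ) (t : Fin (G + 1)) (n : ℕ) :
    (Jp G K ^ n) (psiLW G K t) ≠ 0 := by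
  have hinj : Function.Injective (Jp G K ^ n) := by
    rw [Module.End.coe_pow]
    exact (Jp_injective G K).iterate n
  exact (map_ne_zero_iff _ hinj).mpr (psiLW_ne_zero G K t)

/-- If j > γ - 1, the repeated action of 𝒥₊ on any lowest weight vector
ψ_(μ) never vanishes. -/
theorem Jp_pow_psiLW_ne_zero (G K : ℕ) (hG : 1 ≤ G)
    (hj : ((K : ℝ) - 1) / 2 > (G : ℝ) / 2 - 1)
    (t : Fin (G + 1)) (n : ℕ) :
    (Jp G K ^ n) (psiLW G K t) ≠ 0 :=
  Jp_pow_psiLW_ne_zero_general G K t n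

end
end

section
/- Let γ ≥ 1/2 be a half-integer, ε ∈ {0, 1/2}, and j ∈ ℂ with 2j ∉ ℤ. Then for every M ∈ ε + γ + ℤ, the restriction Q_M of the Casimir 𝒬 of F_γ ⊗ C^ε_j to V_M is diagonalizable, and its eigenvalues are exactly the 2γ+1 pairwise distinct values q_(μ) = −(j+μ)(j+μ+1), μ ∈ {−γ, −γ+1, …, γ}. Consequently 𝒬 is diagonalizable on F_γ ⊗ C^ε_j. -/
/-!
Couplings F_γ ⊗ C^ε_j for sl(2,ℝ).

Conventions: γ = G/2 with `G : ℕ`, `1 ≤ G`; ε is encoded by `E : ℂ` (with `E = 0 ∨ E = 1/2`);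
j ∈ ℂ. The space F_γ ⊗ C^ε_j has basis indexed by `(ν, z) : Fin (G+1) × ℤ`, the basis vector
`single (ν,z) 1` representing |γ, ν-γ⟩ ⊗ |j, ε+z⟩.
-/

noncomputable section

/-- m = ε + z for z : ℤ. -/
def mcont (E : ℂ) (z : ℤ) : ℂ := E + (z : ℂ)

/-- The vector space F_γ ⊗ C^ε_j. -/
abbrev Wc (G : ℕ) := (Fin (G + 1) × ℤ) →₀ ℂ

/-- Basis vector with coefficient, out-of-range F_γ indices giving 0. -/
def eVc (G : ℕ) (i : ℤ) (z : ℤ) (c : ℂ) : Wc G :=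
  if h : 0 ≤ i ∧ i < (G : ℤ) + 1 then
    Finsupp.single ((⟨i.toNat, by omega⟩ : Fin (G + 1)), z) c
  else 0

/-- 𝒥₀ = J₀ ⊗ 1 + 1 ⊗ J₀. -/
def J0c (G : ℕ) (E : ℂ) : Wc G →ₗ[ℂ] Wc G :=
  Finsupp.lsum ℂ fun p => LinearMap.toSpanSingleton ℂ (Wc G)
    (Finsupp.single p (muc G p.1 + mcont E p.2))

/-- 𝒥₊ = J₊ ⊗ 1 + 1 ⊗ J₊. -/
def Jpc (G : ℕ) (j E : ℂ) : Wc G →ₗ[ℂ] Wc G :=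
  Finsupp.lsum ℂ fun p => LinearMap.toSpanSingleton ℂ (Wc G)
    (eVc G ((p.1 : ℕ) + 1) p.2 (Cp (gam G) (muc G p.1)) +
      Finsupp.single (p.1, p.2 + 1) (Cp j (mcont E p.2)))

/-- 𝒥₋ = J₋ ⊗ 1 + 1 ⊗ J₋. -/
def Jmc (G : ℕ) (j E : ℂ) : Wc G →ₗ[ℂ] Wc G :=
  Finsupp.lsum ℂ fun p => LinearMap.toSpanSingleton ℂ (Wc G)
    (eVc G ((p.1 : ℕ) - 1) p.2 (Cm (gam G) (muc G p.1)) +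
      Finsupp.single (p.1, p.2 - 1) (Cm j (mcont E p.2)))

/-- The Casimir 𝒬 = -𝒥₀(𝒥₀+1) + 𝒥₋𝒥₊. -/
def Qc (G : ℕ) (j E : ℂ) : Wc G →ₗ[ℂ] Wc G :=
  -(J0c G E ∘ₗ (J0c G E + LinearMap.id)) + Jmc G j E ∘ₗ Jpc G j E

/-- The 𝒥₀-eigenvalue-M subspace V_M of F_γ ⊗ C^ε_j for M = ε + γ + M₀, M₀ : ℤ:
spanned by the |γ,ν-γ⟩⊗|j,ε+z⟩ with (ν-γ) + (ε+z) = M, i.e. z = G + M₀ - ν. -/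
def VMc (G : ℕ) (M₀ : ℤ) : Submodule ℂ (Wc G) :=
  Submodule.span ℂ
    {w : Wc G | ∃ ν : Fin (G + 1), w = Finsupp.single (ν, (G : ℤ) + M₀ - (ν : ℕ)) 1}

/-- q_(μ) = -(j+μ)(j+μ+1) with μ = t - γ. -/
def qc (G : ℕ) (j : ℂ) (t : Fin (G + 1)) : ℂ :=
  -((j + muc G t) * (j + muc G t + 1))

/-- A linear operator is diagonalizable on an invariant subspace `p` iff `p` is spanned by
eigenvectors of the operator lying in `p`. -/
def DiagOn {V : Type*} [AddCommGroup V] [Module ℂ V]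
    (f : V →ₗ[ℂ] V) (p : Submodule ℂ V) : Prop :=
  Submodule.span ℂ {w : V | w ∈ p ∧ ∃ c : ℂ, f w = c • w} = p

/-!
The matrix of `𝒬` on `V_M` is tridiagonal, and the characteristic polynomial of a tridiagonal matrix
depends on the off-diagonal entries only through the products of opposite ones. Since
`C₊(j,m) C₋(j,m+1) = -(j-m)(j+m+1)`, the square roots disappear from these products, and `𝒬` has the
same characteristic polynomial on `V_M` as the Casimir of `x∂_y + u∂_v` and `y∂_x + v∂_u` on the
formal divided powers `e_k = x^[k] y^[n-k] u^[p-k] v^[r+k]`, where `n = 2γ`, `p = j+γ+M` and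
`r = j-γ-M`. The latter is triangular in the basis `f_k = ∑ᵢ (i choose k) eᵢ`, which consists of the
parts of degree `n` in `x, y` of the products `x^[k] (x+u)^[p-k] (y+v)^[r+n]`, and its diagonal
entries are the `q_(γ-k)`. So `∏ (X - q_(μ))` is the characteristic polynomial of `Q_M` whatever `j`
is, and `Q_M` is diagonalizable as soon as its roots are simple.
-/

section Diagonalizable

variable {U V : Type*} [AddCommGroup U] [Module ℂ U] [AddCommGroup V] [Module ℂ V]
  {f : V →ₗ[ℂ] V} {g : U →ₗ[ℂ] U} {φ : U →ₗ[ℂ] V}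

theorem diagOn_iff_le_span {p : Submodule ℂ V} :
    DiagOn f p ↔ p ≤ Submodule.span ℂ {w : V | w ∈ p ∧ ∃ c : ℂ, f w = c • w} :=
  ⟨fun h => h.ge, fun h => (Submodule.span_le.2 fun _ hw => hw.1).antisymm h⟩

theorem diagOn_iSup {ι : Sort*} {p : ι → Submodule ℂ V} (h : ∀ i, DiagOn f (p i)) :
    DiagOn f (⨆ i, p i) := by
  refine diagOn_iff_le_span.2 (iSup_le fun i => (diagOn_iff_le_span.1 (h i)).trans ?_)
  exact Submodule.span_mono fun w hw => ⟨le_iSup p i hw.1, hw.2⟩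

theorem diagOn_range_of_comp_eq (h : f ∘ₗ φ = φ ∘ₗ g) (hg : DiagOn g ⊤) :
    DiagOn f (LinearMap.range φ) := by
  rw [diagOn_iff_le_span, ← Submodule.map_top, ← hg, Submodule.map_span, Submodule.span_le]
  rintro _ ⟨u, ⟨-, c, hc⟩, rfl⟩
  refine Submodule.subset_span ⟨Submodule.subset_span ⟨u, ⟨trivial, c, hc⟩, rfl⟩, c, ?_⟩
  rw [← LinearMap.comp_apply, h, LinearMap.comp_apply, hc, map_smul]

theorem exists_eigenvector_mem_range_iff (h : f ∘ₗ φ = φ ∘ₗ g) (hφ : Function.Injective φ) (c : ℂ) :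
    (∃ w ∈ LinearMap.range φ, w ≠ 0 ∧ f w = c • w) ↔ Module.End.HasEigenvalue g c := by
  have eigen_iff (u : U) : f (φ u) = c • φ u ↔ g u = c • u := by
    rw [← LinearMap.comp_apply, h, LinearMap.comp_apply, ← map_smul, hφ.eq_iff]
  constructor
  · rintro ⟨_, ⟨u, rfl⟩, hu, hc⟩
    exact Module.End.hasEigenvalue_of_hasEigenvector
      ⟨Module.End.mem_eigenspace_iff.2 ((eigen_iff u).1 hc), (map_ne_zero_iff φ hφ).1 hu⟩
  · intro hc
    obtain ⟨u, hu⟩ := hc.exists_hasEigenvector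
    exact ⟨φ u, ⟨u, rfl⟩, (map_ne_zero_iff φ hφ).2 hu.2, (eigen_iff u).2 hu.apply_eq_smul⟩

theorem diagOn_top_of_squarefree_charpoly [FiniteDimensional ℂ U] (hg : Squarefree g.charpoly) :
    DiagOn g ⊤ := by
  have hss : Module.End.IsSemisimple g :=
    Module.End.isSemisimple_of_squarefree_aeval_eq_zero hg g.aeval_self_charpoly
  rw [diagOn_iff_le_span, ← hss.iSup_eigenspace_eq_top]
  refine iSup_le fun c w hw => Submodule.subset_span ⟨?_, c, Module.End.mem_eigenspace_iff.1 hw⟩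
  exact Submodule.mem_iSup_of_mem c hw

end Diagonalizable

section Tridiagonal

open Polynomial

variable {R : Type*} [CommRing R]

/-- The tridiagonal `n × n` matrix whose `k`-th column has the entry `a k` on the diagonal, `b k`
below it and `c k` above it. The coefficients are indexed by the column, so that the entries which
would lie outside the matrix (`c 0` and `b (n - 1)`) are ignored. -/
def tridiagonal (a b c : ℕ → R) (n : ℕ) : Matrix (Fin n) (Fin n) R :=
  Matrix.of fun i k => (if (i : ℕ) = k then a k else 0) + (if (i : ℕ) = k + 1 then b k else 0) +
    (if (i : ℕ) + 1 = k then c k else 0)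

theorem sum_tridiagonal_smul {M : Type*} [AddCommGroup M] [Module R M] (a b c : ℕ → R) {n : ℕ}
    {v : ℕ → M} (hv : v n = 0) (k : Fin n) :
    ∑ i : Fin n, tridiagonal a b c n i k • v i =
      a k • v k + b k • v (k + 1) + if (k : ℕ) = 0 then 0 else c k • v (k - 1) := by
  have hbelow : (if (k : ℕ) + 1 < n then b k • v (k + 1) else 0) = b k • v (k + 1) := by
    split_ifs with h
    · rfl
    · rw [show (k : ℕ) + 1 = n by omega, hv, smul_zero]
  have habove : ∑ i ∈ Finset.range n, (if i + 1 = (k : ℕ) then c k • v i else 0) =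
      if (k : ℕ) = 0 then 0 else c k • v (k - 1) := by
    obtain ⟨_ | k, hk⟩ := k
    · simp
    · simp [show k < n by omega]
  simp only [tridiagonal, Matrix.of_apply, add_smul, ite_smul, zero_smul, Finset.sum_add_distrib]
  rw [Fin.sum_univ_eq_sum_range (fun i => if i = (k : ℕ) then a k • v i else 0),
    Fin.sum_univ_eq_sum_range (fun i => if i = (k : ℕ) + 1 then b k • v i else 0),
    Fin.sum_univ_eq_sum_range (fun i => if i + 1 = (k : ℕ) then c k • v i else 0), habove,
    Finset.sum_ite_eq', Finset.sum_ite_eq']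
  simp only [Finset.mem_range, k.is_lt, if_true, hbelow]

theorem sum_tridiagonal_upper_mul (a : ℕ → R) {c : ℕ → R} {n : ℕ} (hc : c n = 0) (v : ℕ → R)
    (i : Fin n) :
    ∑ k : Fin n, tridiagonal a 0 c n i k * v k = a i * v i + c (i + 1) * v (i + 1) := by
  have habove : (if (i : ℕ) + 1 < n then c (i + 1) * v (i + 1) else 0) =
      c (i + 1) * v (i + 1) := by
    split_ifs with h
    · rfl
    · rw [show (i : ℕ) + 1 = n by omega, hc, zero_mul]
  simp only [tridiagonal, Matrix.of_apply, Pi.zero_apply, ite_self, add_zero, add_mul, ite_mul,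
    zero_mul, Finset.sum_add_distrib]
  rw [Fin.sum_univ_eq_sum_range (fun k => if (i : ℕ) = k then a k * v k else 0),
    Fin.sum_univ_eq_sum_range (fun k => if (i : ℕ) + 1 = k then c k * v k else 0),
    Finset.sum_ite_eq, Finset.sum_ite_eq]
  simp only [Finset.mem_range, i.is_lt, if_true, habove]

theorem tridiagonal_submatrix_succ (a b c : ℕ → R) (n : ℕ) :
    (tridiagonal a b c (n + 1)).submatrix Fin.succ Fin.succ =
      tridiagonal (fun k => a (k + 1)) (fun k => b (k + 1)) (fun k => c (k + 1)) n := by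
  ext i k
  simp [tridiagonal]

theorem det_tridiagonal_add_two (a b c : ℕ → R) (n : ℕ) :
    (tridiagonal a b c (n + 2)).det =
      a 0 * (tridiagonal (fun k => a (k + 1)) (fun k => b (k + 1)) (fun k => c (k + 1)) (n + 1)).det
        - b 0 * c 1 *
          (tridiagonal (fun k => a (k + 2)) (fun k => b (k + 2)) (fun k => c (k + 2)) n).det := by
  set A := tridiagonal a b c (n + 2) with hA
  have hminor : (A.submatrix Fin.succ (Fin.succAbove 1)).det = b 0 *
      (tridiagonal (fun k => a (k + 2)) (fun k => b (k + 2)) (fun k => c (k + 2)) n).det := by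
    have hcols : Fin.succAbove 1 ∘ Fin.succ = (Fin.succ ∘ Fin.succ : Fin n → Fin (n + 2)) := by
      ext k; simp
    rw [Matrix.det_succ_column_zero, Fin.sum_univ_succ, Finset.sum_eq_zero, add_zero,
      Matrix.submatrix_submatrix, hcols, Fin.succAbove_zero, ← Matrix.submatrix_submatrix, hA,
      tridiagonal_submatrix_succ, tridiagonal_submatrix_succ]
    · simp [tridiagonal]
    · simp [hA, tridiagonal]
  have h00 : A 0 0 = a 0 := by simp [hA, tridiagonal]
  have h01 : A 0 1 = c 1 := by simp [hA, tridiagonal]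
  rw [Matrix.det_succ_row_zero, Fin.sum_univ_succ, Fin.sum_univ_succ, Finset.sum_eq_zero,
    Fin.succAbove_zero, Fin.succ_zero_eq_one, hminor, h00, h01, hA, tridiagonal_submatrix_succ]
  · simp only [Fin.val_zero, Fin.val_one, pow_zero, pow_one]
    ring
  · simp [hA, tridiagonal]

theorem det_tridiagonal_congr (a : ℕ → R) {b c b' c' : ℕ → R}
    (h : ∀ k, b k * c (k + 1) = b' k * c' (k + 1)) (n : ℕ) :
    (tridiagonal a b c n).det = (tridiagonal a b' c' n).det := by
  induction n using Nat.twoStepInduction generalizing a b c b' c' with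
  | zero => simp
  | one => simp [tridiagonal]
  | more n ih ih' =>
    rw [det_tridiagonal_add_two, det_tridiagonal_add_two, h 0,
      ih' (b' := fun k => b' (k + 1)) (c' := fun k => c' (k + 1)) _ fun k => h (k + 1),
      ih (b' := fun k => b' (k + 2)) (c' := fun k => c' (k + 2)) _ fun k => h (k + 2)]

theorem charmatrix_tridiagonal (a b c : ℕ → R) (n : ℕ) :
    (tridiagonal a b c n).charmatrix =
      tridiagonal (fun k => X - C (a k)) (fun k => -C (b k)) (fun k => -C (c k)) n := by
  ext1 i k
  simp only [Matrix.charmatrix_apply, Matrix.diagonal_apply, tridiagonal, Matrix.of_apply,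
    Fin.ext_iff]
  split_ifs <;> first | omega | simp

theorem charpoly_tridiagonal_congr (a : ℕ → R) {b c b' c' : ℕ → R}
    (h : ∀ k, b k * c (k + 1) = b' k * c' (k + 1)) (n : ℕ) :
    (tridiagonal a b c n).charpoly = (tridiagonal a b' c' n).charpoly := by
  simp only [Matrix.charpoly, charmatrix_tridiagonal]
  refine det_tridiagonal_congr _ (fun k => ?_) n
  simp only [neg_mul_neg, ← C_mul, h]

theorem charpoly_eq_of_mul_eq_mul {ι : Type*} [Fintype ι] [DecidableEq ι] {A B P : Matrix ι ι R}
    (hP : IsUnit P) (h : P * A = B * P) : A.charpoly = B.charpoly := by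
  obtain ⟨P, rfl⟩ := hP
  rw [← Matrix.charpoly_units_conj P A, h, ← Matrix.coe_units_inv, Units.mul_inv_cancel_right]

theorem charpoly_tridiagonal_upper (a c : ℕ → R) (n : ℕ) :
    (tridiagonal a 0 c n).charpoly = ∏ k : Fin n, (X - C (a k)) := by
  rw [Matrix.charpoly_of_isUpperTriangular]
  · simp [tridiagonal]
  · intro i k hik
    have : (k : ℕ) < i := hik
    simp [tridiagonal, show (i : ℕ) ≠ k by omega, show (i : ℕ) + 1 ≠ k by omega]

/-- Pascal's triangle as a lower triangular matrix. -/
def pascalMatrix (R : Type*) [CommRing R] (n : ℕ) : Matrix (Fin n) (Fin n) R :=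
  Matrix.of fun i k => ((i : ℕ).choose k : R)

theorem isUnit_pascalMatrix (n : ℕ) : IsUnit (pascalMatrix R n) := by
  have hlower : (pascalMatrix R n).IsLowerTriangular := fun i k hik => by
    simp [pascalMatrix, Nat.choose_eq_zero_of_lt (show (i : ℕ) < k from hik)]
  rw [Matrix.isUnit_iff_isUnit_det, Matrix.det_of_isLowerTriangular _ hlower]
  simp [pascalMatrix]

theorem succ_mul_cast_choose_succ (i k : ℕ) :
    ((k : R) + 1) * (i.choose (k + 1) : R) = (i - k) * (i.choose k : R) := by
  have habsorb : ((i : R) + 1) * i.choose k = (i + 1).choose (k + 1) * (k + 1) := by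
    exact_mod_cast congrArg (Nat.cast (R := R)) (Nat.add_one_mul_choose_eq i k)
  rw [Nat.choose_succ_succ, Nat.cast_add] at habsorb
  linear_combination -habsorb

theorem choose_three_term (n p r s : R) (i k : ℕ) :
    (s - (n - k) * (k + 1) - (r + k) * (p - k + 1)) * (i.choose k : R) +
        (k + 1) * (r + k + 1) * (i.choose (k + 1) : R) +
        (if k = 0 then 0 else (n - k + 1) * (p - k + 1) * (i.choose (k - 1) : R)) =
      (s - (r + n - i) * (p - i + 1)) * (i.choose k : R) +
        (n - i) * (p - i) * ((i + 1).choose k : R) := by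
  rcases k with _ | k
  · simp only [Nat.choose_zero_right, zero_add, Nat.choose_one_right, Nat.cast_zero, Nat.cast_one,
      if_true]
    ring
  · have hk := succ_mul_cast_choose_succ (R := R) i k
    have hk' := succ_mul_cast_choose_succ (R := R) i (k + 1)
    rw [if_neg k.succ_ne_zero, Nat.add_sub_cancel, Nat.choose_succ_succ, Nat.cast_add]
    push_cast at hk' ⊢
    linear_combination (r + k + 2) * hk' - (n + p - i - k) * hk

/-- The matrix of the Casimir in the divided powers `(-1)^k x^[k] y^[n-k] u^[p-k] v^[r+k]`, where
`s` is the scalar by which `-𝒥₀(𝒥₀+1)` acts. The factor `(-1)^k` removes the signs of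
the off-diagonal entries. -/
def monomialCasimir (n : ℕ) (p r s : R) : Matrix (Fin (n + 1)) (Fin (n + 1)) R :=
  tridiagonal (fun k => s - (n - k) * (k + 1) - (r + k) * (p - k + 1))
    (fun k => (k + 1) * (r + k + 1)) (fun k => (n - k + 1) * (p - k + 1)) (n + 1)

theorem charpoly_monomialCasimir (n : ℕ) (p r s : R) :
    (monomialCasimir n p r s).charpoly =
      ∏ k : Fin (n + 1), (X - C (s - (r + n - k) * (p - k + 1))) := by
  suffices h : pascalMatrix R (n + 1) * monomialCasimir n p r s =
      tridiagonal (fun k => s - (r + n - k) * (p - k + 1)) 0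
          (fun k => (n - k + 1) * (p - k + 1)) (n + 1) * pascalMatrix R (n + 1) by
    rw [charpoly_eq_of_mul_eq_mul (isUnit_pascalMatrix (n + 1)) h, charpoly_tridiagonal_upper]
  ext i k
  have hcol := sum_tridiagonal_smul (fun k : ℕ => s - (n - k) * (k + 1) - (r + k) * (p - k + 1))
    (fun k => (k + 1) * (r + k + 1)) (fun k => (n - k + 1) * (p - k + 1))
    (v := fun l => ((i : ℕ).choose l : R))
    (by rw [Nat.choose_eq_zero_of_lt i.is_lt, Nat.cast_zero]) k
  have hrow := sum_tridiagonal_upper_mul (fun k => s - (r + n - k) * (p - k + 1))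
    (c := fun k => (n - k + 1) * (p - k + 1)) (n := n + 1) (by simp)
    (fun l => (l.choose k : R)) i
  calc (pascalMatrix R (n + 1) * monomialCasimir n p r s) i k
    _ = ∑ l : Fin (n + 1), monomialCasimir n p r s l k • ((i : ℕ).choose l : R) := by
      simp only [Matrix.mul_apply, pascalMatrix, Matrix.of_apply, smul_eq_mul, mul_comm]
    _ = _ := hcol
    _ = (s - (r + n - i) * (p - i + 1)) * ((i : ℕ).choose k : R) +
        (n - i) * (p - i) * ((i + 1 : ℕ).choose k : R) := by
      simpa only [smul_eq_mul] using choose_three_term (n : R) p r s i k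
    _ = _ := by
      simp only [Matrix.mul_apply, pascalMatrix, Matrix.of_apply, hrow]
      push_cast
      ring

end Tridiagonal

section Casimir

theorem csqrt_sq (z : ℂ) : csqrt z ^ 2 = z := by
  simp [csqrt]

theorem csqrt_zero : csqrt 0 = 0 := by
  simp [csqrt]

theorem Cm_add_one (j m : ℂ) : Cm j (m + 1) = Cp j m := by
  rw [Cm, Cp, ← add_assoc, sub_add_eq_sub_sub, sub_add_cancel]
  ring

theorem Cp_sq (j m : ℂ) : Cp j m ^ 2 = -((j - m) * (j + m + 1)) := by
  rw [Cp, mul_pow, mul_pow, csqrt_sq, csqrt_sq, Complex.I_sq]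
  ring

theorem Cp_mul_Cm_add_one (j m : ℂ) : Cp j m * Cm j (m + 1) = -((j - m) * (j + m + 1)) := by
  rw [Cm_add_one, ← sq, Cp_sq]

theorem eVc_fin (G : ℕ) (ν : Fin (G + 1)) (z : ℤ) (c : ℂ) :
    eVc G (ν : ℕ) z c = Finsupp.single (ν, z) c := by
  rw [eVc, dif_pos (by omega)]
  simp

theorem eVc_eq_zero {G : ℕ} {i : ℤ} (h : ¬(0 ≤ i ∧ i < (G : ℤ) + 1)) (z : ℤ) (c : ℂ) :
    eVc G i z c = 0 :=
  dif_neg h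

theorem eVc_eq_smul (G : ℕ) (i z : ℤ) (c : ℂ) : eVc G i z c = c • eVc G i z 1 := by
  by_cases h : 0 ≤ i ∧ i < (G : ℤ) + 1
  · simp [eVc, h]
  · simp [eVc_eq_zero h]

theorem exists_fin_coe_eq {G : ℕ} {i : ℤ} (h : 0 ≤ i ∧ i < (G : ℤ) + 1) :
    ∃ ν : Fin (G + 1), ((ν : ℕ) : ℤ) = i :=
  ⟨⟨i.toNat, by omega⟩, Int.toNat_of_nonneg h.1⟩

theorem J0c_eVc (G : ℕ) (E : ℂ) (i z : ℤ) :
    J0c G E (eVc G i z 1) = (i - gam G + mcont E z) • eVc G i z 1 := by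
  by_cases h : 0 ≤ i ∧ i < (G : ℤ) + 1
  · obtain ⟨ν, rfl⟩ := exists_fin_coe_eq h
    simp [eVc_fin, J0c, muc]
  · simp [eVc_eq_zero h]

theorem Jpc_eVc (G : ℕ) (j E : ℂ) (i z : ℤ) :
    Jpc G j E (eVc G i z 1) =
      Cp (gam G) (i - gam G) • eVc G (i + 1) z 1 + Cp j (mcont E z) • eVc G i (z + 1) 1 := by
  by_cases h : 0 ≤ i ∧ i < (G : ℤ) + 1
  · obtain ⟨ν, rfl⟩ := exists_fin_coe_eq h
    rw [← eVc_eq_smul, ← eVc_eq_smul, eVc_fin, eVc_fin]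
    simp [Jpc, muc]
  -- At `i = -1` the left side is zero by convention, and `C₊(γ, -γ-1) = 0`.
  · rcases eq_or_ne i (-1) with rfl | hi
    · simp [eVc_eq_zero h, Cp, csqrt_zero]
    · simp [eVc_eq_zero h, eVc_eq_zero (show ¬(0 ≤ i + 1 ∧ i + 1 < (G : ℤ) + 1) by omega)]

theorem Jmc_eVc (G : ℕ) (j E : ℂ) (i z : ℤ) :
    Jmc G j E (eVc G i z 1) =
      Cm (gam G) (i - gam G) • eVc G (i - 1) z 1 + Cm j (mcont E z) • eVc G i (z - 1) 1 := by
  by_cases h : 0 ≤ i ∧ i < (G : ℤ) + 1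
  · obtain ⟨ν, rfl⟩ := exists_fin_coe_eq h
    rw [← eVc_eq_smul, ← eVc_eq_smul, eVc_fin, eVc_fin]
    simp [Jmc, muc]
  -- At `i = G + 1` the left side is zero by convention, and `C₋(γ, γ+1) = 0`.
  · rcases eq_or_ne i (G + 1) with rfl | hi
    · have : gam G - ((G : ℂ) + 1 - gam G) + 1 = 0 := by rw [gam]; ring
      simp [eVc_eq_zero h, Cm, this, csqrt_zero]
    · simp [eVc_eq_zero h, eVc_eq_zero (show ¬(0 ≤ i - 1 ∧ i - 1 < (G : ℤ) + 1) by omega)]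

theorem Qc_eVc (G : ℕ) (j E : ℂ) (i z : ℤ) {μ m : ℂ} (hμ : μ = i - gam G) (hm : m = mcont E z) :
    Qc G j E (eVc G i z 1) =
      (-((μ + m) * (μ + m + 1)) - (gam G - μ) * (gam G + μ + 1) - (j - m) * (j + m + 1)) •
        eVc G i z 1 +
      (Cp (gam G) μ * Cm j m) • eVc G (i + 1) (z - 1) 1 +
      (Cm (gam G) μ * Cp j m) • eVc G (i - 1) (z + 1) 1 := by
  have hμ_succ : ((i + 1 : ℤ) : ℂ) - gam G = μ + 1 := by rw [hμ]; push_cast; ring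
  have hm_succ : mcont E (z + 1) = m + 1 := by rw [hm, mcont, mcont]; push_cast; ring
  simp only [Qc, LinearMap.add_apply, LinearMap.neg_apply, LinearMap.comp_apply,
    LinearMap.id_apply, J0c_eVc, map_add, map_smul, Jpc_eVc, Jmc_eVc, hμ_succ, hm_succ, ← hμ, ← hm,
    add_sub_cancel_right]
  linear_combination (norm := module)
    Cp_mul_Cm_add_one (gam G) μ • eVc G i z 1 + Cp_mul_Cm_add_one j m • eVc G i z 1

/-- The product basis vector `|γ, i-γ⟩ ⊗ |j, M-(i-γ)⟩` of `V_M`, where `M = ε + γ + M₀`; it is zero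
for `i` out of range. -/
def weightVector (G : ℕ) (M₀ i : ℤ) : Wc G :=
  eVc G i (G + M₀ - i) 1

theorem weightVector_fin (G : ℕ) (M₀ : ℤ) (ν : Fin (G + 1)) :
    weightVector G M₀ (ν : ℕ) = Finsupp.single (ν, (G : ℤ) + M₀ - (ν : ℕ)) 1 :=
  eVc_fin G ν _ 1

/-- The matrix of the Casimir in the basis `weightVector G M₀` of `V_M`; here `k - γ` is the weight
of the first factor and `mcont E (G + M₀ - k)` that of the second. -/
def casimirMatrix (G : ℕ) (j E : ℂ) (M₀ : ℤ) : Matrix (Fin (G + 1)) (Fin (G + 1)) ℂ :=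
  tridiagonal
    (fun k => -((E + gam G + M₀) * (E + gam G + M₀ + 1)) - (G - k) * (k + 1) -
      (j - mcont E (G + M₀ - k)) * (j + mcont E (G + M₀ - k) + 1))
    (fun k => Cp (gam G) (k - gam G) * Cm j (mcont E (G + M₀ - k)))
    (fun k => Cm (gam G) (k - gam G) * Cp j (mcont E (G + M₀ - k))) (G + 1)

theorem Qc_weightVector (G : ℕ) (j E : ℂ) (M₀ : ℤ) (k : Fin (G + 1)) :
    Qc G j E (weightVector G M₀ (k : ℕ)) =
      ∑ i : Fin (G + 1), casimirMatrix G j E M₀ i k • weightVector G M₀ (i : ℕ) := by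
  have hout : weightVector G M₀ (G + 1 : ℕ) = 0 := eVc_eq_zero (by push_cast; omega) _ _
  have hbelow : eVc G ((k : ℕ) + 1) (G + M₀ - (k : ℕ) - 1) 1 = weightVector G M₀ (k + 1 : ℕ) := by
    rw [weightVector, Nat.cast_add_one, sub_sub]
  have habove : eVc G ((k : ℕ) - 1) (G + M₀ - (k : ℕ) + 1) 1 =
      if (k : ℕ) = 0 then 0 else weightVector G M₀ (k - 1 : ℕ) := by
    split_ifs with hk
    · exact eVc_eq_zero (by omega) _ _
    · rw [weightVector, Nat.cast_pred (Nat.pos_of_ne_zero hk), sub_add]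
  set m := mcont E (G + M₀ - (k : ℕ)) with hm
  have hweight : (k : ℕ) - gam G + m = E + gam G + M₀ := by
    simp only [hm, mcont, gam]
    push_cast
    ring
  have hfirst : (gam G - ((k : ℕ) - gam G)) * (gam G + ((k : ℕ) - gam G) + 1) =
      (G - (k : ℕ)) * ((k : ℕ) + 1) := by
    rw [gam]
    ring
  rw [casimirMatrix, sum_tridiagonal_smul _ _ _ hout (v := fun i : ℕ => weightVector G M₀ i),
    weightVector, Qc_eVc G j E _ _ (μ := (k : ℕ) - gam G) (by rw [Int.cast_natCast]) hm, hweight,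
    hfirst, hbelow, habove]
  simp only [smul_ite, smul_zero, weightVector, hm]

/-- `∑ xₖ • weightVector G M₀ k`, the coordinate parametrization of `V_M`. -/
def weightSpaceMap (G : ℕ) (M₀ : ℤ) : (Fin (G + 1) → ℂ) →ₗ[ℂ] Wc G :=
  Fintype.linearCombination ℂ fun ν : Fin (G + 1) => weightVector G M₀ (ν : ℕ)

theorem range_weightSpaceMap (G : ℕ) (M₀ : ℤ) :
    LinearMap.range (weightSpaceMap G M₀) = VMc G M₀ := by
  rw [weightSpaceMap, Fintype.range_linearCombination, VMc]
  congr 1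
  ext w
  simp [weightVector_fin, eq_comm]

theorem weightSpaceMap_injective (G : ℕ) (M₀ : ℤ) : Function.Injective (weightSpaceMap G M₀) := by
  have hinj : Function.Injective fun ν : Fin (G + 1) => (ν, (G : ℤ) + M₀ - (ν : ℕ)) :=
    fun _ _ h => congrArg Prod.fst h
  have hind :=
    (Finsupp.basisSingleOne (R := ℂ) (ι := Fin (G + 1) × ℤ)).linearIndependent.comp _ hinj
  rw [weightSpaceMap, ← linearIndependent_iff_injective_fintypeLinearCombination]
  simpa [Function.comp_def, weightVector_fin] using hind

theorem Qc_comp_weightSpaceMap (G : ℕ) (j E : ℂ) (M₀ : ℤ) :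
    Qc G j E ∘ₗ weightSpaceMap G M₀ =
      weightSpaceMap G M₀ ∘ₗ Matrix.toLin' (casimirMatrix G j E M₀) := by
  ext1 k
  ext1
  simp [weightSpaceMap, Fintype.linearCombination_apply, Qc_weightVector]

theorem charpoly_casimirMatrix_eq_monomialCasimir (G : ℕ) (j E : ℂ) (M₀ : ℤ) :
    (casimirMatrix G j E M₀).charpoly =
      (monomialCasimir G (j + E + G + M₀) (j - E - G - M₀)
        (-((E + gam G + M₀) * (E + gam G + M₀ + 1)))).charpoly := by
  have hdiag (k : ℕ) : (j - mcont E (G + M₀ - k)) * (j + mcont E (G + M₀ - k) + 1) =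
      (j - E - G - M₀ + k) * (j + E + G + M₀ - k + 1) := by
    simp only [mcont]
    push_cast
    ring
  simp only [casimirMatrix, monomialCasimir, hdiag]
  refine charpoly_tridiagonal_congr _ (fun k => ?_) _
  have hμ : ((k + 1 : ℕ) : ℂ) - gam G = k - gam G + 1 := by push_cast; ring
  set m := mcont E (G + M₀ - (k + 1 : ℕ)) with hm
  have hm_succ : mcont E (G + M₀ - k) = m + 1 := by
    simp only [hm, mcont]
    push_cast
    ring
  rw [hμ, hm_succ]
  calc Cp (gam G) (k - gam G) * Cm j (m + 1) * (Cm (gam G) (k - gam G + 1) * Cp j m)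
    _ = (Cp (gam G) (k - gam G) * Cm (gam G) (k - gam G + 1)) * (Cp j m * Cm j (m + 1)) := by ring
    _ = _ := by
      rw [Cp_mul_Cm_add_one, Cp_mul_Cm_add_one]
      simp only [hm, mcont, gam]
      push_cast
      ring

theorem charpoly_casimirMatrix (G : ℕ) (j E : ℂ) (M₀ : ℤ) :
    (casimirMatrix G j E M₀).charpoly =
      ∏ t : Fin (G + 1), (Polynomial.X - Polynomial.C (qc G j t)) := by
  rw [charpoly_casimirMatrix_eq_monomialCasimir, charpoly_monomialCasimir,
    ← Equiv.prod_comp Fin.revPerm]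
  refine Finset.prod_congr rfl fun t _ => ?_
  congr 2
  simp only [Fin.revPerm_apply, Fin.val_rev, Nat.add_sub_add_right, Nat.cast_sub t.is_le, qc, muc,
    gam]
  ring

theorem exists_eigenvector_mem_VMc_iff (G : ℕ) (j E : ℂ) (M₀ : ℤ) (c : ℂ) :
    (∃ w ∈ VMc G M₀, w ≠ 0 ∧ Qc G j E w = c • w) ↔ ∃ t : Fin (G + 1), c = qc G j t := by
  rw [← range_weightSpaceMap, exists_eigenvector_mem_range_iff (Qc_comp_weightSpaceMap G j E M₀)
      (weightSpaceMap_injective G M₀), Module.End.hasEigenvalue_iff_isRoot_charpoly,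
    Matrix.charpoly_toLin', charpoly_casimirMatrix, Polynomial.isRoot_prod]
  simp [sub_eq_zero]

theorem diagOn_VMc {G : ℕ} {j : ℂ} (hq : Function.Injective (qc G j)) (E : ℂ) (M₀ : ℤ) :
    DiagOn (Qc G j E) (VMc G M₀) := by
  rw [← range_weightSpaceMap]
  refine diagOn_range_of_comp_eq (Qc_comp_weightSpaceMap G j E M₀)
    (diagOn_top_of_squarefree_charpoly ?_)
  rw [Matrix.charpoly_toLin', charpoly_casimirMatrix]
  exact (Polynomial.separable_prod_X_sub_C_iff.2 hq).squarefree

theorem iSup_VMc (G : ℕ) : ⨆ M₀ : ℤ, VMc G M₀ = ⊤ := by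
  rw [eq_top_iff, ← (Finsupp.basisSingleOne (R := ℂ)).span_eq, Submodule.span_le]
  rintro _ ⟨⟨ν, z⟩, rfl⟩
  refine Submodule.mem_iSup_of_mem (z + (ν : ℕ) - G) (Submodule.subset_span ⟨ν, ?_⟩)
  simp

-- `q_(μ) = q_(μ')` with `μ ≠ μ'` means `2j = -μ - μ' - 1`, an integer from `-2γ` to `2γ - 2`.
theorem qc_injective {G : ℕ} {j : ℂ} (hj : ∀ n ∈ Set.Icc (-(G : ℤ)) (G - 2), 2 * j ≠ n) :
    Function.Injective (qc G j) := by
  intro t t' h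
  by_contra hne
  have hne' : ((t : ℕ) : ℂ) - (t' : ℕ) ≠ 0 :=
    sub_ne_zero.2 fun h => hne (Fin.ext (Nat.cast_injective h))
  have hzero : 2 * j + (t : ℕ) + (t' : ℕ) - G + 1 = 0 := by
    refine (mul_eq_zero.1 ?_).resolve_left hne'
    simp only [qc, muc, gam] at h
    linear_combination -h
  refine hj (G - (t : ℕ) - (t' : ℕ) - 1) ⟨by omega, by omega⟩ ?_
  push_cast
  linear_combination hzero

end Casimir

theorem Qc_diagonalizable_of_not_half_integer_general (G : ℕ) (E j : ℂ)
    (hj : ∀ n ∈ Set.Icc (-(G : ℤ)) (G - 2), 2 * j ≠ n) :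
    (∀ M₀ : ℤ,
      DiagOn (Qc G j E) (VMc G M₀) ∧
      (∀ c : ℂ,
        (∃ w ∈ VMc G M₀, w ≠ 0 ∧ Qc G j E w = c • w) ↔ ∃ t : Fin (G + 1), c = qc G j t) ∧
      (∀ t t' : Fin (G + 1), qc G j t = qc G j t' → t = t')) ∧
    DiagOn (Qc G j E) (⊤ : Submodule ℂ (Wc G)) := by
  have hq := qc_injective hj
  refine ⟨fun M₀ => ⟨diagOn_VMc hq E M₀, exists_eigenvector_mem_VMc_iff G j E M₀, hq⟩, ?_⟩
  rw [← iSup_VMc]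
  exact diagOn_iSup (diagOn_VMc hq E)

/-- For 2j ∉ ℤ, the restriction of 𝒬 to each V_M is diagonalizable with
eigenvalues exactly the 2γ+1 pairwise distinct values q_(μ), μ ∈ {-γ,...,γ};
consequently 𝒬 is diagonalizable on F_γ ⊗ C^ε_j. -/
theorem Qc_diagonalizable_of_not_half_integer (G : ℕ) (hG : 1 ≤ G) (E j : ℂ)
    (hE : E = 0 ∨ E = 1 / 2) (hj : ¬ ∃ n : ℤ, 2 * j = (n : ℂ)) :
    (∀ M₀ : ℤ,
      DiagOn (Qc G j E) (VMc G M₀) ∧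
      (∀ c : ℂ,
        (∃ w ∈ VMc G M₀, w ≠ 0 ∧ Qc G j E w = c • w) ↔ ∃ t : Fin (G + 1), c = qc G j t) ∧
      (∀ t t' : Fin (G + 1), qc G j t = qc G j t' → t = t')) ∧
    DiagOn (Qc G j E) (⊤ : Submodule ℂ (Wc G)) := by
  exact Qc_diagonalizable_of_not_half_integer_general G E j fun n _ h => hj ⟨n, h⟩

end
end
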